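/- For every integer n ≥ 2 and every k ≥ 1, if s_k(n) is a prime number, then 2k + 1 is prime. -/

import Mathlib

/-!
The sequence extends to negative indices with `s_{-1-k} = -s_k`, and it satisfies the reflection
identity `s_{c+i} + s_{c-i} = T_i s_c`. Modulo `s_a` the sequence is therefore odd about the
indices `a` and `-1/2`, hence periodic with period `2a + 1` (`s_dvd_period`). If
`2k + 1 = (2a + 1)(2b + 1)`, then `k = a + b(2a + 1)`, so `s_a ∣ s_k`. Since `s` is strictly
increasing for `n ≥ 2`, this gives `1 < s_a < s_k` when `a, b ≥ 1`, and `s_k` is not prime.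
-/

/-- The sequence `s_k(n)`: `s_0 = 1`, `s_1 = n + 1`, `s_{k+2} = n·s_{k+1} − s_k`. -/
def s (n : ℤ) : ℕ → ℤ
  | 0 => 1
  | 1 => n + 1
  | k + 2 => n * s n (k + 1) - s n k

/-- The sequence `r_k(n)`: `r_0 = 1`, `r_1 = n − 1`, `r_{k+2} = n·r_{k+1} − r_k`. -/
def r (n : ℤ) : ℕ → ℤ
  | 0 => 1
  | 1 => n - 1
  | k + 2 => n * r n (k + 1) - r n k

/-- Dilated Chebyshev polynomials of the first kind: `T_0 = 2`, `T_1 = n`. -/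
def T (n : ℤ) : ℕ → ℤ
  | 0 => 2
  | 1 => n
  | k + 2 => n * T n (k + 1) - T n k

/-- Dilated Chebyshev polynomials of the second kind: `U_0 = 1`, `U_1 = n`. -/
def U (n : ℤ) : ℕ → ℤ
  | 0 => 1
  | 1 => n
  | k + 2 => n * U n (k + 1) - U n k

lemma s_add_two (n : ℤ) (k : ℕ) : s n (k + 2) = n * s n (k + 1) - s n k := rfl

lemma T_add_two (n : ℤ) (k : ℕ) : T n (k + 2) = n * T n (k + 1) - T n k := rfl

/-- Reflection about the index `d + i`, stated with natural-number indices only. -/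
lemma s_reflect (n : ℤ) (i : ℕ) : ∀ d, s n (d + 2 * i) + s n d = T n i * s n (d + i) := by
  induction i using Nat.twoStepInduction with
  | zero => intro d; simp only [T, mul_zero, add_zero]; ring
  | one => intro d; simp only [T, mul_one, s_add_two]; ring
  | more i ih0 ih1 =>
    intro d
    have h1 := ih1 (d + 1)
    have h0 := ih0 (d + 2)
    rw [show d + 1 + 2 * (i + 1) = d + 2 * i + 3 by ring,
      show d + 1 + (i + 1) = d + i + 2 by ring] at h1
    rw [show d + 2 + 2 * i = d + 2 * i + 2 by ring,
      show d + 2 + i = d + i + 2 by ring] at h0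
    rw [show d + 2 * (i + 2) = d + 2 * i + 2 + 2 by ring,
      show d + (i + 2) = d + i + 2 by ring, T_add_two, s_add_two n (d + 2 * i + 2)]
    have e := s_add_two n d
    linear_combination n * h1 - h0 + e

/-- Modulo `s_a` the sequence has period `2a + 1`. -/
lemma s_dvd_period (n : ℤ) (a : ℕ) (ha : 1 ≤ a) (j : ℕ) :
    s n a ∣ s n (j + (2 * a + 1)) - s n j := by
  obtain ⟨c, rfl⟩ : ∃ c, a = c + 1 := ⟨a - 1, by omega⟩
  have h0 := s_reflect n (c + 1) 0
  have h1 := s_reflect n c 1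
  rw [show 0 + 2 * (c + 1) = 2 * c + 2 by ring, zero_add] at h0
  rw [show 1 + 2 * c = 2 * c + 1 by ring, add_comm 1 c] at h1
  have e0 : s n 0 = 1 := rfl
  have e1 : s n 1 = n + 1 := rfl
  have e3 : s n (2 * c + 3) = n * s n (2 * c + 2) - s n (2 * c + 1) := rfl
  have e4 : s n (2 * c + 4) = n * s n (2 * c + 3) - s n (2 * c + 2) := rfl
  have d3 : s n (2 * c + 3) - 1 = s n (c + 1) * (n * T n (c + 1) - T n c) := by
    linear_combination e3 + n * h0 - h1 - n * e0 + e1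
  induction j using Nat.twoStepInduction with
  | zero =>
    rw [show 0 + (2 * (c + 1) + 1) = 2 * c + 3 by ring, e0, d3]
    exact dvd_mul_right _ _
  | one =>
    rw [show 1 + (2 * (c + 1) + 1) = 2 * c + 4 by ring]
    refine ⟨n * (n * T n (c + 1) - T n c) - T n (c + 1), ?_⟩
    linear_combination e4 + n * d3 - h0 + e0 - e1
  | more j ih0 ih1 =>
    obtain ⟨u, hu⟩ := ih0
    obtain ⟨v, hv⟩ := ih1
    rw [show j + 1 + (2 * (c + 1) + 1) = j + (2 * (c + 1) + 1) + 1 by ring] at hv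
    rw [show j + 2 + (2 * (c + 1) + 1) = j + (2 * (c + 1) + 1) + 2 by ring, s_add_two,
      s_add_two]
    exact ⟨n * v - u, by linear_combination n * hv - hu⟩

lemma s_dvd (n : ℤ) (a : ℕ) (ha : 1 ≤ a) (b : ℕ) : s n a ∣ s n (a + b * (2 * a + 1)) := by
  induction b with
  | zero => simp
  | succ b ih =>
    have := dvd_add (s_dvd_period n a ha (a + b * (2 * a + 1))) ih
    rw [sub_add_cancel] at this
    rwa [show a + (b + 1) * (2 * a + 1) = a + b * (2 * a + 1) + (2 * a + 1) by ring]

lemma s_strictMono (n : ℤ) (hn : 2 ≤ n) : StrictMono (s n) := by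
  -- Positivity is carried along: `s_{k+2} - s_{k+1} ≥ s_{k+1} - s_k` needs `s_{k+1} ≥ 0`.
  have key : ∀ k, 0 < s n k ∧ s n k < s n (k + 1) := by
    intro k
    induction k with
    | zero => simp only [s]; constructor <;> omega
    | succ k ih =>
      refine ⟨ih.1.trans ih.2, ?_⟩
      rw [s_add_two]
      nlinarith [ih.1, ih.2]
  exact strictMono_nat_of_lt_succ fun k => (key k).2

theorem s_prime_implies_index_prime (n : ℤ) (hn : 2 ≤ n) (k : ℕ) (hk : 1 ≤ k)
    (h : Prime (s n k)) : Nat.Prime (2 * k + 1) := by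
  by_contra hp
  obtain ⟨x, ⟨y, hxy⟩, hx1, hxk⟩ := Nat.exists_dvd_of_not_prime2 (by omega) hp
  have hodd : Odd (x * y) := hxy ▸ odd_two_mul_add_one k
  obtain ⟨⟨a, rfl⟩, ⟨b, rfl⟩⟩ := Nat.odd_mul.mp hodd
  have ha : 1 ≤ a := by omega
  have hka : k = a + b * (2 * a + 1) := by linarith
  have hlt : s n a < s n k := s_strictMono n hn (by omega)
  have hone : 1 < s n a := s_strictMono n hn (show 0 < a by omega)
  have hdvd : s n a ∣ s n k := hka ▸ s_dvd n a ha b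
  rcases h.irreducible.dvd_iff.mp hdvd with hu | hassoc
  · rcases Int.isUnit_iff.mp hu with e | e <;> omega
  · have := Int.le_of_dvd (by omega) hassoc.dvd
    omega
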